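/- Let k ≥ 2, g ∈ C(J) on an interval J of length |J| with 2ρ ≥ |J| ≥ ρ > 0, and suppose ω_k(g, t; J) ≤ A·ω(t) for all 0 < t ≤ 2ρ, where ω is nondecreasing with t^(−k)·ω(t) nonincreasing, and ‖g‖_J ≤ A·ω(ρ). Then for all 0 < t ≤ ρ and all η ∈ [t, ρ], ω₁(g, t; J) ≤ c(k)·A·ω(η)·(1 + t·ρ^(k−1)·η^(−k)). In particular, choosing η = t^(1/k)·ρ^(1−1/k) gives ω₁(g, t; J) ≤ c(k)·A·ω(t^(1/k)·ρ^(1−1/k)). -/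

import Mathlib

open Set

/-- The `k`-th modulus of smoothness of `f` on `[a,b]`. -/
noncomputable def wmod (k : ℕ) (f : ℝ → ℝ) (t a b : ℝ) : ℝ :=
  sSup {v : ℝ | ∃ u x : ℝ, 0 < u ∧ u ≤ t ∧ a ≤ x - k * u / 2 ∧ x + k * u / 2 ≤ b ∧
    v = |∑ i ∈ Finset.range (k + 1),
          (-1 : ℝ) ^ i * (k.choose i : ℝ) * f (x + ((k : ℝ) / 2 - i) * u)|}

/-!
Write `T` for the translation by `h`. Since `Δ_{2h} = T² - 1 = (1 + T) Δ_h`, the binomial theorem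
gives `Δ_{2h}^j f (y) = ∑ i, (j choose i) Δ_h^j f (y + i h)`. Neighbouring values of `Δ_h^j f`
differ by values of `Δ_h^{j+1} f`, so `Δ_h^j f` equals `2^{-j} Δ_{2h}^j f` up to `j` times a bound
on `Δ_h^{j+1} f`. Doubling the step until it is comparable with `ρ`, where `‖f‖ ≤ N` controls every
difference, turns a bound `M + N (h/ρ)^{j+1}` on `Δ_h^{j+1} f` into a multiple of `M + N (h/ρ)^j` on
`Δ_h^j f`. Descending from `j = k` to `j = 1` with `M = A ω(η)` and `N = M (ρ/η)^k`, for which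
`A ω(t) ≤ M + N (t/ρ)^k` and `A ω(ρ) ≤ N` by the monotonicity of `ω(t)` and `ω(t) / t^k`, proves the
estimate.
-/

section Algebra

variable {M G : Type*} [AddCommMonoid M] [AddCommGroup G]

open fwdDiff_aux in
theorem fwdDiff_iterate_two_nsmul (h : M) (f : M → G) (n : ℕ) (y : M) :
    (fwdDiff (2 • h))^[n] f y
      = ∑ i ∈ Finset.range (n + 1), n.choose i • (fwdDiff h)^[n] f (y + i • h) := by
  have hfactor : fwdDiffₗ M G (2 • h) = (shiftₗ M G h + 1) * fwdDiffₗ M G h := by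
    ext φ x
    simp [shiftₗ_apply, fwdDiff, two_nsmul, add_assoc]
  have hcomm : Commute (shiftₗ M G h + 1) (fwdDiffₗ M G h) :=
    ((Commute.refl _).add_left (Commute.one_left _)).add_left (Commute.one_left _)
  rw [← coe_fwdDiffₗ_pow, hfactor, hcomm.mul_pow, (Commute.one_right _).add_pow,
    ← coe_fwdDiffₗ_pow]
  simp only [one_pow, mul_one, ← nsmul_eq_mul', Module.End.mul_apply, LinearMap.sum_apply,
    Finset.sum_apply, LinearMap.smul_apply, Pi.smul_apply, shiftₗ_pow_apply]

end Algebra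

section Norm

variable {M E : Type*} [AddCommMonoid M] [SeminormedAddCommGroup E] {h y : M} {j m : ℕ} {B N : ℝ}

theorem norm_fwdDiff_iterate_le {f : M → E} (hf : ∀ i ≤ j, ‖f (y + i • h)‖ ≤ N) :
    ‖(fwdDiff h)^[j] f y‖ ≤ 2 ^ j * N := by
  induction j generalizing y with
  | zero => simpa using hf 0 le_rfl
  | succ j ih =>
    rw [Function.iterate_succ_apply']
    have hleft := ih fun i hi => hf i (by lia)
    have hright := ih (y := y + h) fun i hi => by
      simpa only [succ_nsmul', add_assoc] using hf (i + 1) (by lia)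
    calc ‖(fwdDiff h)^[j] f (y + h) - (fwdDiff h)^[j] f y‖
        ≤ ‖(fwdDiff h)^[j] f (y + h)‖ + ‖(fwdDiff h)^[j] f y‖ := norm_sub_le _ _
      _ ≤ 2 ^ j * N + 2 ^ j * N := add_le_add hright hleft
      _ = 2 ^ (j + 1) * N := by ring

theorem norm_sub_le_of_norm_fwdDiff_le {φ : M → E} (hB : 0 ≤ B)
    (hφ : ∀ l < j, ‖fwdDiff h φ (y + l • h)‖ ≤ B) {p q : ℕ} (hp : p ≤ j) (hq : q ≤ j) :
    ‖φ (y + p • h) - φ (y + q • h)‖ ≤ j * B := by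
  wlog hpq : p ≤ q generalizing p q
  · rw [norm_sub_rev]
    exact this hq hp (by lia)
  have hstep : ∀ {l : ℕ}, p ≤ l → l < q →
      dist (φ (y + l • h)) (φ (y + (l + 1) • h)) ≤ B := fun _ hl => by
    simpa only [dist_eq_norm_sub', fwdDiff, succ_nsmul, add_assoc] using hφ _ (hl.trans_le hq)
  calc ‖φ (y + p • h) - φ (y + q • h)‖
      ≤ ∑ _l ∈ Finset.Ico p q, B := by
        simpa only [dist_eq_norm] using
          dist_le_Ico_sum_of_dist_le (f := fun l => φ (y + l • h)) hpq hstep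
    _ = (q - p : ℕ) * B := by simp
    _ ≤ j * B := by gcongr; lia

theorem two_pow_mul_norm_fwdDiff_iterate_le [NormedSpace ℝ E] {f : M → E} (hm : m ≤ j)
    (hB : 0 ≤ B) (hf : ∀ l < j, ‖(fwdDiff h)^[j + 1] f (y + l • h)‖ ≤ B) :
    2 ^ j * ‖(fwdDiff h)^[j] f (y + m • h)‖ ≤ ‖(fwdDiff (2 • h))^[j] f y‖ + 2 ^ j * (j * B) := by
  set φ := (fwdDiff h)^[j] f
  simp only [Function.iterate_succ_apply'] at hf
  have hchoose : ∑ i ∈ Finset.range (j + 1), (j.choose i : ℝ) = 2 ^ j := by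
    exact_mod_cast Nat.sum_range_choose j
  have hdiff : (2 ^ j : ℝ) • φ (y + m • h) - (fwdDiff (2 • h))^[j] f y
      = ∑ i ∈ Finset.range (j + 1), (j.choose i : ℝ) • (φ (y + m • h) - φ (y + i • h)) := by
    simp only [smul_sub, Finset.sum_sub_distrib]
    rw [← Finset.sum_smul, hchoose, fwdDiff_iterate_two_nsmul]
    simp only [Nat.cast_smul_eq_nsmul, φ]
  have hclose : ‖(2 ^ j : ℝ) • φ (y + m • h) - (fwdDiff (2 • h))^[j] f y‖ ≤ 2 ^ j * (j * B) := by
    rw [hdiff, ← hchoose, Finset.sum_mul]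
    refine norm_sum_le_of_le _ fun i hi => ?_
    rw [norm_smul, Real.norm_natCast]
    gcongr
    exact norm_sub_le_of_norm_fwdDiff_le hB hf hm (Finset.mem_range_succ_iff.mp hi)
  calc 2 ^ j * ‖φ (y + m • h)‖ = ‖(2 ^ j : ℝ) • φ (y + m • h)‖ := by simp [norm_smul]
    _ ≤ ‖(fwdDiff (2 • h))^[j] f y‖ + ‖(2 ^ j : ℝ) • φ (y + m • h) - (fwdDiff (2 • h))^[j] f y‖ :=
      norm_le_norm_add_norm_sub' _ _
    _ ≤ ‖(fwdDiff (2 • h))^[j] f y‖ + 2 ^ j * (j * B) := by gcongr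

end Norm

@[elab_as_elim]
theorem halving_induction {P : ℝ → Prop} {δ : ℝ}
    (large : ∀ h, δ ≤ h → h < 2 * δ → P h) (halve : ∀ h, 0 < h → h < δ → P (2 * h) → P h)
    {h : ℝ} (hh : 0 < h) (hlt : h < 2 * δ) : P h := by
  obtain ⟨n, hn⟩ := pow_unbounded_of_one_lt (δ / h) one_lt_two
  rw [div_lt_iff₀ hh] at hn
  induction n generalizing h with
  | zero => exact large h (by simpa using hn.le) hlt
  | succ n ih =>
    rcases le_or_gt δ h with hle | hgt
    · exact large h hle hlt
    · exact halve h hh hgt (ih (by positivity) (by linarith) (by rwa [← mul_assoc, ← pow_succ]))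

section StepDoubling

variable {E : Type*} [SeminormedAddCommGroup E] {f : ℝ → E} {a b h ρ B M N : ℝ} {j : ℕ}

/-- `B` bounds the `j`-th forward differences of `f` of step `h` on `[a, b]`, that is,
`‖Δ_h^j f(x)‖ ≤ B` whenever `[x, x + j h] ⊆ [a, b]` (for `h ≥ 0`). The modulus of smoothness
`ω_j(f, t; [a, b])` is the least such `B` common to all steps `0 < h ≤ t`. -/
def FwdDiffBound (j : ℕ) (f : ℝ → E) (a b h B : ℝ) : Prop :=
  ∀ x, a ≤ x → x + j * h ≤ b → ‖(fwdDiff h)^[j] f x‖ ≤ B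

namespace FwdDiffBound

theorem mono {B' : ℝ} (hf : FwdDiffBound j f a b h B) (hB : B ≤ B') :
    FwdDiffBound j f a b h B' :=
  fun x hax hxb => (hf x hax hxb).trans hB

theorem of_norm_le (hf : ∀ x ∈ Icc a b, ‖f x‖ ≤ N) (hh : 0 ≤ h) :
    FwdDiffBound j f a b h (2 ^ j * N) := fun x hax hxb => by
  refine norm_fwdDiff_iterate_le fun i hi => hf _ ?_
  rw [nsmul_eq_mul]
  constructor
  · have : 0 ≤ i * h := by positivity
    linarith
  · have : i * h ≤ j * h := by gcongr
    linarith

theorem of_norm_le_of_div_le (hρ : 0 < ρ) (hN : 0 ≤ N) (hf : ∀ x ∈ Icc a b, ‖f x‖ ≤ N) (hj : 0 < j)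
    (hh : ρ / (3 * j) ≤ h) :
    FwdDiffBound j f a b h (N * ((6 * j) ^ j * (h / ρ) ^ j)) := by
  have hh0 : 0 ≤ h := le_trans (by positivity) hh
  rw [div_le_iff₀ (by positivity)] at hh
  have hscale : 2 ≤ 6 * j * (h / ρ) := by
    rw [← mul_div_assoc, le_div_iff₀ hρ]
    linarith
  refine (of_norm_le hf hh0).mono ?_
  rw [mul_comm, ← mul_pow]
  gcongr

variable [NormedSpace ℝ E]

theorem of_two_mul {B' : ℝ} (hh : 0 ≤ h) (hab : 3 * j * h ≤ b - a) (hB : 0 ≤ B)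
    (hsucc : FwdDiffBound (j + 1) f a b h B) (hdouble : FwdDiffBound j f a b (2 * h) B') :
    FwdDiffBound j f a b h (B' / 2 ^ j + j * B) := fun x hax hxb => by
  -- A stencil of step `2h` through `x` may only fit on one side, so `x` is its left or right end.
  obtain ⟨y, m, hm, hay, hyb, rfl⟩ : ∃ (y : ℝ) (m : ℕ),
      m ≤ j ∧ a ≤ y ∧ y + j * (2 * h) ≤ b ∧ y + m • h = x := by
    rcases le_or_gt (x + j * (2 * h)) b with hright | hleft
    · exact ⟨x, 0, by lia, hax, hright, by simp⟩
    · exact ⟨x - j * h, j, le_rfl, by linarith, by linarith, by simp⟩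
  have hfit : ∀ l < j, ‖(fwdDiff h)^[j + 1] f (y + l • h)‖ ≤ B := fun l hl => by
    have hl' : (l + 1 : ℝ) ≤ j := by exact_mod_cast hl
    have hlh : 0 ≤ l * h := by positivity
    rw [nsmul_eq_mul]
    refine hsucc _ (by linarith) ?_
    push_cast
    nlinarith
  have hcompare := two_pow_mul_norm_fwdDiff_iterate_le hm hB hfit
  rw [two_nsmul, ← two_mul] at hcompare
  rw [← mul_le_mul_iff_right₀ (by positivity : (0 : ℝ) < 2 ^ j), mul_add,
    mul_div_cancel₀ _ (by positivity)]
  linarith [hdouble y hay hyb]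

-- The subtracted term absorbs the errors: doubling the step multiplies it by `2 ^ (j + 1)`, so
-- after division by `2 ^ j` there is one copy of it to spare, and this copy cancels the
-- contribution `j * (N * (h / ρ) ^ (j + 1))` of the differences of order `j + 1`.
theorem of_succ_of_lt (hj : 0 < j) (hρ : 0 < ρ) (hρab : ρ ≤ b - a) (hM : 0 ≤ M)
    (hf : ∀ x ∈ Icc a b, ‖f x‖ ≤ N)
    (hsucc : ∀ h, 0 < h → h ≤ ρ → FwdDiffBound (j + 1) f a b h (M + N * (h / ρ) ^ (j + 1)))
    (hh : 0 < h) (hlt : h < 2 * (ρ / (3 * j))) :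
    FwdDiffBound j f a b h
      (2 * j * M + N * (((6 * j) ^ j + 1) * (h / ρ) ^ j - j * (h / ρ) ^ (j + 1))) := by
  have hN : 0 ≤ N := (norm_nonneg _).trans (hf a ⟨le_rfl, by linarith⟩)
  have hj' : (1 : ℝ) ≤ j := by exact_mod_cast hj
  refine halving_induction (fun h hle hlt => ?_) (fun h hh hlt hdouble => ?_) hh hlt
  · refine (of_norm_le_of_div_le hρ hN hf hj hle).mono ?_
    have hh : 0 < h := lt_of_lt_of_le (by positivity) hle
    have hjh : j * (h / ρ) ≤ 1 := by
      rw [← mul_div_assoc, div_le_one hρ]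
      rw [← mul_div_assoc, lt_div_iff₀ (by positivity)] at hlt
      linarith
    have htail : j * (h / ρ) ^ (j + 1) ≤ (h / ρ) ^ j := by
      rw [pow_succ, mul_left_comm]
      exact mul_le_of_le_one_right (by positivity) hjh
    calc N * ((6 * j) ^ j * (h / ρ) ^ j)
        ≤ N * (((6 * j) ^ j + 1) * (h / ρ) ^ j - j * (h / ρ) ^ (j + 1)) := by
          gcongr
          linarith
      _ ≤ _ := le_add_of_nonneg_left (by positivity)
  · rw [lt_div_iff₀ (by positivity)] at hlt
    have hhρ : h ≤ ρ := by nlinarith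
    refine (of_two_mul hh.le (by linarith) (by positivity) (hsucc h hh hhρ) hdouble).mono ?_
    have hMj : 2 * j * M / 2 ^ j ≤ j * M := by
      have htwo : (2 : ℝ) ≤ 2 ^ j := le_self_pow₀ one_le_two hj.ne'
      rw [div_le_iff₀ (by positivity)]
      nlinarith [mul_nonneg (by positivity : 0 ≤ j * M) (sub_nonneg.mpr htwo)]
    have hNj : N * (((6 * j) ^ j + 1) * (2 * h / ρ) ^ j - j * (2 * h / ρ) ^ (j + 1)) / 2 ^ j
        = N * (((6 * j) ^ j + 1) * (h / ρ) ^ j - 2 * j * (h / ρ) ^ (j + 1)) := by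
      rw [mul_div_assoc 2 h, mul_pow 2 (h / ρ), mul_pow 2 (h / ρ), pow_succ (2 : ℝ)]
      field_simp
    rw [add_div, hNj]
    linarith

theorem of_succ (hj : 0 < j) (hρ : 0 < ρ) (hρab : ρ ≤ b - a) (hM : 0 ≤ M)
    (hf : ∀ x ∈ Icc a b, ‖f x‖ ≤ N)
    (hsucc : ∀ h, 0 < h → h ≤ ρ → FwdDiffBound (j + 1) f a b h (M + N * (h / ρ) ^ (j + 1)))
    (hh : 0 < h) :
    FwdDiffBound j f a b h (((6 * j) ^ j + 2 * j) * (M + N * (h / ρ) ^ j)) := by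
  have hN : 0 ≤ N := (norm_nonneg _).trans (hf a ⟨le_rfl, by linarith⟩)
  have hj' : (1 : ℝ) ≤ j := by exact_mod_cast hj
  have hMj : 0 ≤ (6 * j : ℝ) ^ j * M := by positivity
  have hjM : 0 ≤ j * M := by positivity
  have hNj : N * (h / ρ) ^ j ≤ 2 * j * (N * (h / ρ) ^ j) :=
    le_mul_of_one_le_left (by positivity) (by linarith)
  rcases lt_or_ge h (2 * (ρ / (3 * j))) with hlt | hge
  · refine (of_succ_of_lt hj hρ hρab hM hf hsucc hh hlt).mono ?_
    have : 0 ≤ N * (j * (h / ρ) ^ (j + 1)) := by positivity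
    linarith
  · have hδ : 0 < ρ / (3 * j) := by positivity
    refine (of_norm_le_of_div_le hρ hN hf hj (by linarith)).mono ?_
    have : 0 ≤ N * (h / ρ) ^ j := by positivity
    linarith

theorem exists_of_order_le (hj : 0 < j) {k : ℕ} (hjk : j ≤ k) : ∃ C : ℝ, 1 ≤ C ∧
    ∀ {f : ℝ → E} {a b ρ M N : ℝ}, 0 < ρ → ρ ≤ b - a → 0 ≤ M → (∀ x ∈ Icc a b, ‖f x‖ ≤ N) →
      (∀ h, 0 < h → h ≤ ρ → FwdDiffBound k f a b h (M + N * (h / ρ) ^ k)) →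
      ∀ h, 0 < h → h ≤ ρ → FwdDiffBound j f a b h (C * (M + N * (h / ρ) ^ j)) := by
  induction k, hjk using Nat.le_induction with
  | base => exact ⟨1, le_rfl, fun _ _ _ _ hf => by simpa only [one_mul] using hf⟩
  | succ k hjk ih =>
    obtain ⟨C, hC, hdescend⟩ := ih
    have hk : (1 : ℝ) ≤ k := by exact_mod_cast hj.trans_le hjk
    set K : ℝ := (6 * k) ^ k + 2 * k
    have hK : 1 ≤ K := by
      have : (0 : ℝ) ≤ (6 * k) ^ k := by positivity
      linarith
    refine ⟨C * K, one_le_mul_of_one_le_of_one_le hC hK, ?_⟩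
    intro f a b ρ M N hρ hρab hM hf hsucc h hh hhρ
    have hN : 0 ≤ N := (norm_nonneg _).trans (hf a ⟨le_rfl, by linarith⟩)
    have horder_k : ∀ h, 0 < h → h ≤ ρ → FwdDiffBound k f a b h (K * M + K * N * (h / ρ) ^ k) :=
      fun h hh _ => (of_succ (hj.trans_le hjk) hρ hρab hM hf hsucc hh).mono (by
        rw [mul_add, mul_assoc])
    refine (hdescend hρ hρab (by positivity)
      (fun x hx => (hf x hx).trans (le_mul_of_one_le_left hN hK)) horder_k h hh hhρ).mono ?_
    rw [mul_assoc C K, mul_add K, mul_assoc K N]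

end FwdDiffBound

end StepDoubling

section Modulus

variable {g : ℝ → ℝ} {a b h t B N : ℝ} {j k : ℕ}

theorem sum_central_eq_fwdDiff_iterate (k : ℕ) (g : ℝ → ℝ) (u x : ℝ) :
    ∑ i ∈ Finset.range (k + 1), (-1 : ℝ) ^ i * (k.choose i : ℝ) * g (x + ((k : ℝ) / 2 - i) * u)
      = (fwdDiff u)^[k] g (x - k * u / 2) := by
  rw [fwdDiff_iter_eq_sum_shift, ← Finset.sum_range_reflect]
  refine Finset.sum_congr rfl fun i hi => ?_
  have hik : i ≤ k := Finset.mem_range_succ_iff.mp hi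
  rw [show k + 1 - 1 - i = k - i by lia, Nat.choose_symm hik, Nat.cast_sub hik]
  simp only [zsmul_eq_mul, nsmul_eq_mul]
  push_cast
  congr 2
  ring

theorem fwdDiffBound_wmod (hg : ∀ x ∈ Icc a b, |g x| ≤ N) (hh : 0 < h) :
    FwdDiffBound k g a b h (wmod k g h a b) := fun x hax hxb => by
  refine le_csSup ⟨2 ^ k * N, ?_⟩ ⟨h, x + k * h / 2, hh, le_rfl, by linarith, by linarith, ?_⟩
  · rintro v ⟨u, y, hu, -, hay, hyb, rfl⟩
    rw [sum_central_eq_fwdDiff_iterate]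
    exact FwdDiffBound.of_norm_le (f := g) (b := b) hg hu.le _ hay (by linarith)
  · rw [sum_central_eq_fwdDiff_iterate, add_sub_cancel_right, Real.norm_eq_abs]

theorem wmod_le (hB : 0 ≤ B) (hg : ∀ h, 0 < h → h ≤ t → FwdDiffBound k g a b h B) :
    wmod k g t a b ≤ B := by
  refine Real.sSup_le ?_ hB
  rintro v ⟨u, x, hu, hut, hax, hxb, rfl⟩
  rw [sum_central_eq_fwdDiff_iterate]
  exact hg u hu hut _ hax (by linarith)

section GrowthClass

variable {W : ℝ → ℝ} {I : Set ℝ} {η : ℝ}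

theorem le_mul_div_pow_of_antitoneOn (hanti : AntitoneOn (fun t => W t / t ^ k) I)
    (hη : η ∈ I) (ht : t ∈ I) (hη0 : 0 < η) (hηt : η ≤ t) : W t ≤ W η * (t / η) ^ k := by
  have hdiv : W t / t ^ k ≤ W η / η ^ k := hanti hη ht hηt
  rw [div_le_iff₀ (pow_pos (hη0.trans_le hηt) k)] at hdiv
  rwa [div_pow, mul_div_left_comm, mul_comm]

theorem le_mul_one_add_div_pow (hmono : MonotoneOn W I)
    (hanti : AntitoneOn (fun t => W t / t ^ k) I) (hη : η ∈ I) (ht : t ∈ I) (hη0 : 0 < η)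
    (ht0 : 0 ≤ t) (hW : 0 ≤ W η) : W t ≤ W η * (1 + (t / η) ^ k) := by
  have htail : 0 ≤ W η * (t / η) ^ k := by positivity
  rw [mul_add, mul_one]
  rcases le_total t η with hle | hge
  · exact (hmono ht hη hle).trans (le_add_of_nonneg_right htail)
  · exact (le_mul_div_pow_of_antitoneOn hanti hη ht hη0 hge).trans (le_add_of_nonneg_left hW)

end GrowthClass

theorem exists_wmod_le_of_wmod_le (hj : 0 < j) (hjk : j ≤ k) : ∃ C : ℝ, 1 ≤ C ∧
    ∀ {g W : ℝ → ℝ} {a b ρ : ℝ}, 0 < ρ → ρ ≤ b - a →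
      MonotoneOn W (Ioc 0 ρ) → AntitoneOn (fun t => W t / t ^ k) (Ioc 0 ρ) →
      (∀ t ∈ Ioc 0 ρ, wmod k g t a b ≤ W t) → (∀ x ∈ Icc a b, |g x| ≤ W ρ) →
      ∀ t ∈ Ioc 0 ρ, ∀ η ∈ Ioc 0 ρ,
        wmod j g t a b ≤ C * (W η * (1 + (ρ / η) ^ k * (t / ρ) ^ j)) := by
  obtain ⟨C, hC, hmarchaud⟩ := FwdDiffBound.exists_of_order_le (E := ℝ) hj hjk
  refine ⟨C, hC, fun {g W a b ρ} hρ hρab hmono hanti hsmooth hg t ht η hη => ?_⟩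
  have ht0 := ht.1
  have hη0 := hη.1
  have hρρ : ρ ∈ Ioc 0 ρ := ⟨hρ, le_rfl⟩
  have hgη : ∀ x ∈ Icc a b, |g x| ≤ W η * (ρ / η) ^ k := fun x hx =>
    (hg x hx).trans (le_mul_div_pow_of_antitoneOn hanti hη hρρ hη0 hη.2)
  have hWη : 0 ≤ W η := nonneg_of_mul_nonneg_left
    ((abs_nonneg _).trans (hgη a ⟨le_rfl, by linarith⟩)) (by positivity)
  have hbound : ∀ h, 0 < h → h ≤ ρ →
      FwdDiffBound k g a b h (W η + W η * (ρ / η) ^ k * (h / ρ) ^ k) := fun h hh hhρ => by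
    refine (fwdDiffBound_wmod hg hh).mono ((hsmooth h ⟨hh, hhρ⟩).trans ?_)
    rw [mul_assoc, ← mul_pow, mul_comm (ρ / η), div_mul_div_cancel₀ hρ.ne', ← mul_one_add]
    exact le_mul_one_add_div_pow hmono hanti hη ⟨hh, hhρ⟩ hη0 hh.le hWη
  refine wmod_le (by positivity) fun h hh hht => ?_
  refine (hmarchaud hρ hρab hWη hgη hbound h hh (hht.trans ht.2)).mono ?_
  rw [mul_assoc (W η), ← mul_one_add]
  gcongr

end Modulus

section GeometricMean

variable {t ρ : ℝ} {k : ℕ}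

theorem rpow_mul_rpow_one_sub_pow (ht : 0 ≤ t) (hρ : 0 < ρ) (hk : k ≠ 0) :
    (t ^ ((1 : ℝ) / k) * ρ ^ (1 - (1 : ℝ) / k)) ^ k = t * ρ ^ (k - 1) := by
  rw [one_div, Real.rpow_sub hρ, Real.rpow_one, mul_pow, div_pow, Real.rpow_inv_natCast_pow ht hk,
    Real.rpow_inv_natCast_pow hρ.le hk, pow_sub₀ ρ hρ.ne' (Nat.one_le_iff_ne_zero.mpr hk),
    pow_one, div_eq_mul_inv]

theorem rpow_mul_rpow_one_sub_mem_Ioc (ht : t ∈ Ioc 0 ρ) (hk : k ≠ 0) :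
    t ^ ((1 : ℝ) / k) * ρ ^ (1 - (1 : ℝ) / k) ∈ Ioc 0 ρ := by
  have ht0 := ht.1
  have hρ : 0 < ρ := ht0.trans_le ht.2
  refine ⟨by positivity, le_of_pow_le_pow_left₀ hk hρ.le ?_⟩
  rw [rpow_mul_rpow_one_sub_pow ht0.le hρ hk, ← mul_pow_sub_one hk ρ]
  gcongr
  exact ht.2

end GeometricMean

theorem stmt10_general (k : ℕ) (hk : 1 ≤ k) :
    ∃ c : ℝ, 0 < c ∧ ∀ (a b ρ A : ℝ) (g ω : ℝ → ℝ),
      0 < ρ → ρ ≤ b - a → 0 < ω ρ →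
      MonotoneOn ω (Ioc 0 ρ) →
      AntitoneOn (fun t => ω t / t ^ k) (Ioc 0 ρ) →
      (∀ t ∈ Ioc 0 ρ, wmod k g t a b ≤ A * ω t) →
      (∀ x ∈ Icc a b, |g x| ≤ A * ω ρ) →
      (∀ t η : ℝ, 0 < t → t ≤ η → η ≤ ρ →
        wmod 1 g t a b ≤ c * A * ω η * (1 + t * ρ ^ (k - 1) / η ^ k)) ∧
      (∀ t : ℝ, 0 < t → t ≤ ρ →
        wmod 1 g t a b ≤ c * A * ω (t ^ ((1 : ℝ) / k) * ρ ^ (1 - (1 : ℝ) / k))) := by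
  have hk0 : k ≠ 0 := Nat.one_le_iff_ne_zero.mp hk
  obtain ⟨C, hC, hmarchaud⟩ := exists_wmod_le_of_wmod_le one_pos hk
  refine ⟨2 * C, by positivity, fun a b ρ A g ω hρ hρab hωρ hmono hanti hsmooth hg => ?_⟩
  have hA : 0 ≤ A := nonneg_of_mul_nonneg_left
    ((abs_nonneg _).trans (hg a ⟨le_rfl, by linarith⟩)) hωρ
  have hA_mono : MonotoneOn (fun t => A * ω t) (Ioc 0 ρ) := fun s hs t ht hst =>
    mul_le_mul_of_nonneg_left (hmono hs ht hst) hA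
  have hA_anti : AntitoneOn (fun t => A * ω t / t ^ k) (Ioc 0 ρ) := fun s hs t ht hst => by
    simpa only [mul_div_assoc] using mul_le_mul_of_nonneg_left (hanti hs ht hst) hA
  have hmain : ∀ t ∈ Ioc 0 ρ, ∀ η ∈ Ioc 0 ρ,
      wmod 1 g t a b ≤ C * A * ω η * (1 + t * ρ ^ (k - 1) / η ^ k) := fun t ht η hη => by
    refine (hmarchaud hρ hρab hA_mono hA_anti hsmooth hg t ht η hη).trans_eq ?_
    rw [div_pow, ← mul_pow_sub_one hk0 ρ]
    field_simp
  refine ⟨fun t η ht htη hηρ => ?_, fun t ht htρ => ?_⟩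
  · have hη : 0 < η := ht.trans_le htη
    have hωη : 0 < ω η := pos_of_mul_pos_left
      (hωρ.trans_le (le_mul_div_pow_of_antitoneOn hanti ⟨hη, hηρ⟩ ⟨hρ, le_rfl⟩ hη hηρ))
      (by positivity)
    refine (hmain t ⟨ht, htη.trans hηρ⟩ η ⟨hη, hηρ⟩).trans ?_
    gcongr
    linarith
  · refine (hmain t ⟨ht, htρ⟩ _ (rpow_mul_rpow_one_sub_mem_Ioc ⟨ht, htρ⟩ hk0)).trans_eq ?_
    rw [rpow_mul_rpow_one_sub_pow ht.le hρ hk0, div_self (by positivity)]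
    ring

/-- the Marchaud-type estimate. If `|J| = b−a` with `ρ ≤ b−a ≤ 2ρ`,
`ω_k(g,t;J) ≤ A·ω(t)` for `0 < t ≤ 2ρ` where `ω` is nondecreasing with
`t^(−k)·ω(t)` nonincreasing, and `‖g‖_J ≤ A·ω(ρ)`, then
`ω₁(g,t;J) ≤ c(k)·A·ω(η)·(1 + t·ρ^(k−1)·η^(−k))` for `0 < t ≤ η ≤ ρ`; in
particular `ω₁(g,t;J) ≤ c(k)·A·ω(t^(1/k)·ρ^(1−1/k))`. -/
theorem stmt10 (k : ℕ) (hk : 2 ≤ k) :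
    ∃ c : ℝ, 0 < c ∧ ∀ (a b ρ A : ℝ) (g ω : ℝ → ℝ),
      0 < ρ → ρ ≤ b - a → b - a ≤ 2 * ρ →
      ContinuousOn g (Icc a b) →
      (∀ t : ℝ, 0 < t → 0 < ω t) →
      (∀ t₁ t₂ : ℝ, 0 < t₁ → t₁ ≤ t₂ → ω t₁ ≤ ω t₂) →
      (∀ t₁ t₂ : ℝ, 0 < t₁ → t₁ ≤ t₂ → ω t₂ / t₂ ^ k ≤ ω t₁ / t₁ ^ k) →
      (∀ t : ℝ, 0 < t → t ≤ 2 * ρ → wmod k g t a b ≤ A * ω t) →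
      (∀ x ∈ Icc a b, |g x| ≤ A * ω ρ) →
      (∀ t η : ℝ, 0 < t → t ≤ η → η ≤ ρ →
        wmod 1 g t a b ≤ c * A * ω η * (1 + t * ρ ^ (k - 1) / η ^ k)) ∧
      (∀ t : ℝ, 0 < t → t ≤ ρ →
        wmod 1 g t a b ≤
          c * A * ω (t ^ ((1 : ℝ) / k) * ρ ^ (1 - (1 : ℝ) / k))) := by
  obtain ⟨c, hc, hgeneral⟩ := stmt10_general k (one_le_two.trans hk)
  exact ⟨c, hc, fun a b ρ A g ω hρ hρab _ _ hpos hmono hanti hsmooth hg =>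
    hgeneral a b ρ A g ω hρ hρab (hpos ρ hρ) (fun s hs t _ => hmono s t hs.1)
      (fun s hs t _ => hanti s t hs.1) (fun t ht => hsmooth t ht.1 (by linarith [ht.2])) hg⟩
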